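/- Let R be a commutative ring and f ∈ R. A complex E in D(R) belongs to Loc(R/(f))^⊥ = Loc(R_f) if and only if every homology module H_n(E) is an R_f-module, i.e. multiplication by f is bijective on each H_n(E). -/

import Mathlib

open CategoryTheory CategoryTheory.Limits CategoryTheory.Pretriangulated ZeroObject

universe w w' v u

section TriangulatedDefs

variable {T : Type u} [Category.{v} T] [Preadditive T] [HasZeroObject T]
  [HasShift T ℤ] [∀ n : ℤ, (shiftFunctor T n).Additive] [Pretriangulated T]

/-- A localizing subcategory of a (pre)triangulated category, encoded as a set of
objects: it is closed under isomorphisms, contains the zero object, is stable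
under shifts, closed under cones of distinguished triangles (hence a full
triangulated subcategory), and closed under arbitrary small coproducts
(phrased via colimit cofans, so that no global existence of coproducts
is needed). -/
structure IsLocalizingSub (S : Set T) : Prop where
  zero_mem : (0 : T) ∈ S
  mem_of_iso : ∀ {x y : T}, (x ≅ y) → x ∈ S → y ∈ S
  shift_mem : ∀ (n : ℤ) {x : T}, x ∈ S → x⟦n⟧ ∈ S
  cone_mem : ∀ (Tr : Triangle T), Tr ∈ distinguishedTriangles →
    Tr.obj₁ ∈ S → Tr.obj₂ ∈ S → Tr.obj₃ ∈ S
  coprod_mem : ∀ {ι : Type w} (f : ι → T) (c : Cofan f), IsColimit c →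
    (∀ i, f i ∈ S) → c.pt ∈ S

/-- A colocalizing subcategory: as `IsLocalizingSub` but with products instead
of coproducts. -/
structure IsColocalizingSub (S : Set T) : Prop where
  zero_mem : (0 : T) ∈ S
  mem_of_iso : ∀ {x y : T}, (x ≅ y) → x ∈ S → y ∈ S
  shift_mem : ∀ (n : ℤ) {x : T}, x ∈ S → x⟦n⟧ ∈ S
  cone_mem : ∀ (Tr : Triangle T), Tr ∈ distinguishedTriangles →
    Tr.obj₁ ∈ S → Tr.obj₂ ∈ S → Tr.obj₃ ∈ S
  prod_mem : ∀ {ι : Type w} (f : ι → T) (c : Fan f), IsLimit c →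
    (∀ i, f i ∈ S) → c.pt ∈ S

/-- `Loc S`: the smallest localizing subcategory containing the set of
objects `S` (the intersection of all localizing subcategories containing it). -/
def Loc (S : Set T) : Set T :=
  ⋂₀ {L : Set T | IsLocalizingSub.{w} L ∧ S ⊆ L}

/-- The right orthogonal of a set of objects. -/
def rightOrth (C : Set T) : Set T :=
  {x : T | ∀ ⦃c : T⦄, c ∈ C → ∀ (g : c ⟶ x), g = 0}

end TriangulatedDefs

section CompactDefs

variable {T : Type u} [Category.{v} T] [Preadditive T]

/-- The canonical comparison map `⨁ᵢ Hom(x, fᵢ) →+ Hom(x, ∐ f)` associated to a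
cofan `c` on a family `f`. -/
noncomputable def cofanHomComparison {ι : Type w} (x : T) (f : ι → T) (c : Cofan f) :
    (Π₀ i, (x ⟶ f i)) →+ (x ⟶ c.pt) :=
  letI := Classical.decEq ι
  DFinsupp.sumAddHom (fun i => AddMonoidHom.mk' (fun φ => φ ≫ c.inj i)
    (fun φ ψ => Preadditive.add_comp _ _ _ φ ψ (c.inj i)))

/-- An object `x` is compact if `Hom(x, -)` commutes with arbitrary small
coproducts, i.e. for every colimit cofan on a family `f`, the canonical map
`⨁ᵢ Hom(x, fᵢ) → Hom(x, ∐ f)` is bijective. -/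
def IsCompactObj (x : T) : Prop :=
  ∀ ⦃ι : Type w⦄ (f : ι → T) (c : Cofan f), IsColimit c →
    Function.Bijective (cofanHomComparison x f c)

end CompactDefs

section DR

variable (R : Type u) [CommRing R] [HasDerivedCategory.{w'} (ModuleCat.{u} R)]

/-- The `R`-module `M`, regarded as an object of the derived category `D(R)`,
as a complex concentrated in degree `0`. -/
noncomputable def smod (M : ModuleCat.{u} R) : DerivedCategory (ModuleCat.{u} R) :=
  (DerivedCategory.singleFunctor (ModuleCat.{u} R) 0).obj M

end DR

/-!
Both memberships say that `f • 𝟙 E` is invertible, i.e. that `f` is bijective on homology.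

The objects on which `f` is invertible form a localizing subcategory containing `R_f`, and there
are no nonzero maps to them from an object killed by `f`, such as `R/(f)` and its shifts.
Conversely, the kernel and cokernel of `f` on `R` are `R/(f)`-modules, hence lie in `Loc(R/(f))`.
So if `E` is right orthogonal to `Loc(R/(f))`, then `f` is invertible on `Hom(R[n], E)`; the cone of
`f • 𝟙 E` has the same property and is killed by `f ^ 2`, so it vanishes because `R` generates.
If instead `f` is bijective on the homology of `E`, then `E ⟶ R_f ⊗ E` is an isomorphism by flatness
of `R_f`, and `R_f ⊗ -` maps `D(R) = Loc(R)` into `Loc(R_f)`.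

That `R` generates `D(R)` under coproducts and cones is proved for any projective separator `G`.
Starting from a coproduct of shifts of `G` that surjects onto the homology of `E`, kill the kernel
on homology by attaching cells, and iterate. The maps on homology induced by the resulting tower
over `E` factor through `H(E)`, so the telescope of the tower splits on homology and its homotopy
colimit is `E`.
-/

section Linear

variable {k C : Type*} [Semiring k] [Category* C] [Preadditive C] [Linear k C]

lemma smul_id_kernel_smul_id (r : k) (M : C) [HasKernel (r • 𝟙 M)] :
    r • 𝟙 (kernel (r • 𝟙 M)) = 0 := by
  rw [← cancel_mono (kernel.ι (r • 𝟙 M))]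
  simpa using kernel.condition (r • 𝟙 M)

lemma smul_id_cokernel_smul_id (r : k) (M : C) [HasCokernel (r • 𝟙 M)] :
    r • 𝟙 (cokernel (r • 𝟙 M)) = 0 := by
  rw [← cancel_epi (cokernel.π (r • 𝟙 M))]
  have := cokernel.condition (r • 𝟙 M)
  simpa only [Linear.smul_comp, Linear.comp_smul, Category.comp_id, Category.id_comp, comp_zero]

end Linear

section Triangulated

variable {T : Type u} [Category.{v} T] [Preadditive T] [HasZeroObject T] [HasShift T ℤ]
  [∀ n : ℤ, (shiftFunctor T n).Additive] [Pretriangulated T]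

lemma isLocalizingSub_loc (S : Set T) : IsLocalizingSub.{w} (Loc.{w} S) where
  zero_mem _ hL := hL.1.zero_mem
  mem_of_iso e hx L hL := hL.1.mem_of_iso e (hx L hL)
  shift_mem n _ hx L hL := hL.1.shift_mem n (hx L hL)
  cone_mem Tr hTr h₁ h₂ L hL := hL.1.cone_mem Tr hTr (h₁ L hL) (h₂ L hL)
  coprod_mem f c hc h L hL := hL.1.coprod_mem f c hc fun i => h i L hL

lemma subset_loc (S : Set T) : S ⊆ Loc.{w} S := fun _ hx _ hL => hL.2 hx

lemma loc_subset {S L : Set T} (hL : IsLocalizingSub.{w} L) (h : S ⊆ L) : Loc.{w} S ⊆ L :=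
  fun _ hx => hx L ⟨hL, h⟩

lemma IsLocalizingSub.cofan_mem_of_small {L : Set T} (hL : IsLocalizingSub.{w} L) {ι : Type*}
    [Small.{w} ι] {f : ι → T} {c : Cofan f} (hc : IsColimit c) (hf : ∀ i, f i ∈ L) : c.pt ∈ L :=
  hL.coprod_mem _ _ (Cofan.isColimitEquivOfEquiv (equivShrink.{w} ι).symm c hc) fun _ => hf _

lemma IsLocalizingSub.isTriangulated {L : Set T} (hL : IsLocalizingSub.{w} L) :
    ObjectProperty.IsTriangulated (· ∈ L) :=
  have : ObjectProperty.IsClosedUnderIsomorphisms (· ∈ L) := ⟨fun e => hL.mem_of_iso e⟩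
  have : ObjectProperty.IsStableUnderShift (· ∈ L) ℤ :=
    ⟨fun n => ⟨fun _ => hL.shift_mem n⟩⟩
  have : ObjectProperty.IsTriangulatedClosed₃ (· ∈ L) := .mk' hL.cone_mem
  { exists_zero := ⟨0, isZero_zero T, hL.zero_mem⟩
    toIsTriangulatedClosed₂ := .of_isTriangulatedClosed₃ }

lemma isLocalizingSub_of_isTriangulated {P : ObjectProperty T} [P.IsTriangulated]
    [P.IsClosedUnderIsomorphisms]
    (hP : ∀ {ι : Type w} (f : ι → T) (c : Cofan f), IsColimit c → (∀ i, P (f i)) → P c.pt) :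
    IsLocalizingSub.{w} {X | P X} where
  zero_mem := P.prop_zero
  mem_of_iso e := P.prop_of_iso e
  shift_mem n _ hx := P.le_shift n _ hx
  cone_mem Tr hTr h₁ h₂ := P.ext_of_isTriangulatedClosed₃ Tr hTr h₁ h₂
  coprod_mem := hP

lemma isLocalizingSub_leftOrthogonal (P : ObjectProperty T) [P.IsStableUnderShift ℤ] :
    IsLocalizingSub.{w} {X | P.leftOrthogonal X} :=
  isLocalizingSub_of_isTriangulated fun _ _ hc h _ _ hY =>
    Cofan.IsColimit.hom_ext hc _ _ fun i => (h i _ hY).trans comp_zero.symm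

lemma loc_subset_leftOrthogonal {S : Set T} {P : ObjectProperty T} [P.IsStableUnderShift ℤ]
    (h : ∀ X ∈ S, P.leftOrthogonal X) {X : T} (hX : X ∈ Loc.{w} S) : P.leftOrthogonal X :=
  loc_subset (isLocalizingSub_leftOrthogonal P) h hX

lemma IsLocalizingSub.preimage {D : Type*} [Category* D] [Preadditive D] [HasZeroObject D]
    [HasShift D ℤ] [∀ n : ℤ, (shiftFunctor D n).Additive] [Pretriangulated D]
    {L : Set T} (hL : IsLocalizingSub.{w} L) (F : D ⥤ T) [F.CommShift ℤ] [F.IsTriangulated]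
    [∀ ι : Type w, PreservesColimitsOfShape (Discrete ι) F] :
    IsLocalizingSub.{w} (F.obj ⁻¹' L) where
  zero_mem := hL.mem_of_iso F.mapZeroObject.symm hL.zero_mem
  mem_of_iso e := hL.mem_of_iso (F.mapIso e)
  shift_mem n X hX := hL.mem_of_iso ((F.commShiftIso n).app X).symm (hL.shift_mem n hX)
  cone_mem Tr hTr := hL.cone_mem _ (F.map_distinguished Tr hTr)
  coprod_mem _ c hc :=
    hL.coprod_mem _ _ (Cofan.isColimitMapCoconeEquiv F _ c (isColimitOfPreserves F hc))

variable {k : Type*} [Semiring k] [Linear k T] [∀ n : ℤ, (shiftFunctor T n).Linear k]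

lemma isLocalizingSub_isIso_smul_id (r : k) :
    IsLocalizingSub.{w} {E : T | IsIso (r • 𝟙 E)} where
  zero_mem := ⟨0, (isZero_zero T).eq_of_src _ _, (isZero_zero T).eq_of_src _ _⟩
  mem_of_iso {X Y} e (hX : IsIso (r • 𝟙 X)) := by
    have : r • 𝟙 Y = e.inv ≫ (r • 𝟙 X) ≫ e.hom := by simp
    rw [Set.mem_ofPred_eq, this]
    infer_instance
  shift_mem n X (hX : IsIso (r • 𝟙 X)) := by
    have : r • 𝟙 (X⟦n⟧) = (r • 𝟙 X)⟦n⟧' := by rw [Functor.map_smul, CategoryTheory.Functor.map_id]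
    rw [Set.mem_ofPred_eq, this]
    infer_instance
  cone_mem Tr hTr h₁ h₂ := isIso₃_of_isIso₁₂
    { hom₁ := r • 𝟙 _, hom₂ := r • 𝟙 _, hom₃ := r • 𝟙 _, comm₃ := by simp [Functor.map_smul] }
    hTr hTr h₁ h₂
  coprod_mem f c hc (hf : ∀ i, IsIso (r • 𝟙 (f i))) := by
    let e : Discrete.functor f ≅ Discrete.functor f :=
      Discrete.natIso fun i => asIso (r • 𝟙 (f i.as))
    have : r • 𝟙 c.pt = (hc.coconePointsIsoOfNatIso hc e).hom :=
      Cofan.IsColimit.hom_ext hc _ _ fun i =>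
        have : c.inj i ≫ (r • 𝟙 c.pt) = e.hom.app ⟨i⟩ ≫ c.inj i := by simp [e]
        this.trans (hc.comp_coconePointsIsoOfNatIso_hom hc e ⟨i⟩).symm
    rw [Set.mem_ofPred_eq, this]
    infer_instance

lemma smul_smul_id_eq_zero_of_distinguished {r : k} {X C : T} {i : X ⟶ C} {δ : C ⟶ X⟦(1 : ℤ)⟧}
    (hT : Triangle.mk (r • 𝟙 X) i δ ∈ distTriang T) : r • r • 𝟙 C = 0 := by
  have smul_i : (r • 𝟙 X) ≫ i = 0 := comp_distTriang_mor_zero₁₂ _ hT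
  have smul_δ : δ ≫ (r • 𝟙 X)⟦(1 : ℤ)⟧' = 0 := comp_distTriang_mor_zero₃₁ _ hT
  rw [Functor.map_smul, CategoryTheory.Functor.map_id, Linear.comp_smul, Category.comp_id] at smul_δ
  have i_smul : i ≫ (r • 𝟙 C) = 0 := by simpa using smul_i
  obtain ⟨h, hh⟩ : ∃ h, r • 𝟙 C = δ ≫ h := Triangle.yoneda_exact₃ _ hT (r • 𝟙 C) i_smul
  rw [hh, ← Linear.smul_comp, smul_δ, zero_comp]

lemma isIso_smul_id_of_rightOrthogonal {P : ObjectProperty T} [P.IsTriangulated] {G : T}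
    (hG : ∀ X, X ∈ Loc.{w} {G}) {r : k} (hr : P.trW (r • 𝟙 G)) {E : T}
    (hE : P.rightOrthogonal E) : IsIso (r • 𝟙 E) := by
  obtain ⟨C, i, δ, hT⟩ := distinguished_cocone_triangle (r • 𝟙 E)
  let N : ObjectProperty T := fun Y => P.rightOrthogonal Y ∧ r • r • 𝟙 Y = 0
  have : N.IsStableUnderShift ℤ := ⟨fun n => ⟨fun Y hY => ⟨P.rightOrthogonal.le_shift n _ hY.1, by
    simpa [Functor.map_smul] using congrArg (shiftFunctor T n).map hY.2⟩⟩⟩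
  have hC : N C := ⟨P.rightOrthogonal.ext_of_isTriangulatedClosed₃ _ hT hE hE,
    smul_smul_id_eq_zero_of_distinguished hT⟩
  have hGN : N.leftOrthogonal G := fun Y g ⟨hY, hrY⟩ => by
    have smul_injective {g : G ⟶ Y} (hg : r • g = 0) : g = 0 := by
      rw [← P.isLocal_trW] at hY
      exact (hY _ hr).1 (by simpa using hg)
    exact smul_injective (smul_injective (by simpa using congrArg (g ≫ ·) hrY))
  have : 𝟙 C = 0 := loc_subset_leftOrthogonal (by simpa) (hG C) _ hC
  exact (Triangle.isZero₃_iff_isIso₁ _ hT).1 ((IsZero.iff_id_eq_zero C).2 this)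

lemma mem_rightOrth_loc_of_isIso_smul_id {r : k} {S : Set T} (hS : ∀ X ∈ S, r • 𝟙 X = 0) {E : T}
    (hE : IsIso (r • 𝟙 E)) : E ∈ rightOrth (Loc.{w} S) := by
  let P : ObjectProperty T := fun Y => IsIso (r • 𝟙 Y)
  have : P.IsStableUnderShift ℤ :=
    (isLocalizingSub_isIso_smul_id.{w} (T := T) r).isTriangulated.toIsStableUnderShift
  have hSP (X) (hX : X ∈ S) : P.leftOrthogonal X := fun Y g (hY : IsIso (r • 𝟙 Y)) => by
    rw [← cancel_mono (r • 𝟙 Y)]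
    simpa using congrArg (· ≫ g) (hS X hX)
  exact fun X hX g => loc_subset_leftOrthogonal hSP hX g hE

end Triangulated

section EssSurj

variable {A B D J : Type*} [Category* A] [Category* B] [Category* D]

lemma exists_iso_comp_of_essSurj (Q : A ⥤ B) [Q.EssSurj] (K : Discrete J ⥤ B) :
    ∃ K' : Discrete J ⥤ A, Nonempty (K' ⋙ Q ≅ K) :=
  ⟨Discrete.functor fun j => Q.objPreimage (K.obj ⟨j⟩),
    ⟨Discrete.natIso fun j => Q.objObjPreimageIso (K.obj j)⟩⟩

lemma hasCoproductsOfShape_of_essSurj (Q : A ⥤ B) [Q.EssSurj] [HasCoproductsOfShape J A]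
    [PreservesColimitsOfShape (Discrete J) Q] : HasCoproductsOfShape J B where
  has_colimit K := by
    obtain ⟨K', ⟨e⟩⟩ := exists_iso_comp_of_essSurj Q K
    have : HasColimit (K' ⋙ Q) := ⟨⟨_, isColimitOfPreserves Q (colimit.isColimit K')⟩⟩
    exact hasColimit_of_iso e.symm

lemma preservesCoproductsOfShape_of_essSurj_comp (Q : A ⥤ B) (G : B ⥤ D) [Q.EssSurj]
    [HasCoproductsOfShape J A] [PreservesColimitsOfShape (Discrete J) Q]
    [PreservesColimitsOfShape (Discrete J) (Q ⋙ G)] :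
    PreservesColimitsOfShape (Discrete J) G where
  preservesColimit {K} := by
    obtain ⟨K', ⟨e⟩⟩ := exists_iso_comp_of_essSurj Q K
    have := preservesColimit_of_preserves_colimit_cocone (F := G)
      (isColimitOfPreserves Q (colimit.isColimit K'))
      (isColimitOfPreserves (Q ⋙ G) (colimit.isColimit K'))
    exact preservesColimit_of_iso_diagram G e

end EssSurj

section Homology

variable {C J : Type*} [Category* C] [Category* J] [Abelian C]

/-- The homology of a diagram of short complexes is the diagram of the homologies. -/
noncomputable def homologyEvaluationIso (S : ShortComplex (J ⥤ C)) :
    (ShortComplex.FunctorEquivalence.functor J C).obj S ⋙ ShortComplex.homologyFunctor C ≅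
      S.homology :=
  NatIso.ofComponents (fun j => S.mapHomologyIso ((evaluation J C).obj j)) fun φ =>
    (Iso.eq_comp_inv _).1 <| (S.homologyMap_mapNatTrans ((evaluation J C).map φ)).trans
      (Category.assoc _ _ _).symm

variable [HasColimitsOfShape J C]

/-- The termwise colimit cocone of a diagram of short complexes, the diagram being encoded as a
short complex of diagrams. -/
noncomputable def shortComplexColimCocone (S : ShortComplex (J ⥤ C)) :
    Cocone ((ShortComplex.FunctorEquivalence.functor J C).obj S) where
  pt := S.map colim
  ι :=
    { app j := S.mapNatTrans { app X := colimit.ι X j }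
      naturality _ _ φ := by
        ext
        exacts [(colimit.w S.X₁ φ).trans (Category.comp_id _).symm,
          (colimit.w S.X₂ φ).trans (Category.comp_id _).symm,
          (colimit.w S.X₃ φ).trans (Category.comp_id _).symm] }

/-- Colimits of short complexes are computed termwise. -/
noncomputable def isColimitShortComplexColimCocone (S : ShortComplex (J ⥤ C)) :
    IsColimit (shortComplexColimCocone S) :=
  ShortComplex.isColimitOfIsColimitπ _
    ((colimit.isColimit S.X₁).ofIsoColimit (Cocone.ext (Iso.refl _) fun _ => Category.comp_id _))
    ((colimit.isColimit S.X₂).ofIsoColimit (Cocone.ext (Iso.refl _) fun _ => Category.comp_id _))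
    ((colimit.isColimit S.X₃).ofIsoColimit (Cocone.ext (Iso.refl _) fun _ => Category.comp_id _))

variable [HasExactColimitsOfShape J C]

/-- Homology preserves the termwise colimit when colimits of shape `J` are exact. -/
noncomputable def isColimitHomologyMapShortComplexColimCocone (S : ShortComplex (J ⥤ C)) :
    IsColimit ((ShortComplex.homologyFunctor C).mapCocone (shortComplexColimCocone S)) :=
  IsColimit.precomposeHomEquiv (homologyEvaluationIso S).symm _ <|
    (colimit.isColimit S.homology).ofIsoColimit <|
      Cocone.ext (S.mapHomologyIso colim).symm fun j => by
        have h := S.homologyMap_mapNatTrans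
          (F := (evaluation J C).obj j) (G := colim) { app X := colimit.ι X j }
        exact ((Iso.inv_comp_eq _).2 h).symm

instance preservesColimitsOfShape_shortComplexHomologyFunctor :
    PreservesColimitsOfShape J (ShortComplex.homologyFunctor C) where
  preservesColimit {K} := by
    have := preservesColimit_of_preserves_colimit_cocone (F := ShortComplex.homologyFunctor C)
      (isColimitShortComplexColimCocone ((ShortComplex.FunctorEquivalence.inverse J C).obj K))
      (isColimitHomologyMapShortComplexColimCocone _)
    exact preservesColimit_of_iso_diagram (K₁ := (ShortComplex.FunctorEquivalence.functor J C).obj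
      ((ShortComplex.FunctorEquivalence.inverse J C).obj K)) _
      ((ShortComplex.FunctorEquivalence.counitIso J C).app K)

instance preservesColimitsOfShape_homologicalComplexHomologyFunctor {ι : Type*}
    (c : ComplexShape ι) (n : ι) :
    PreservesColimitsOfShape J (HomologicalComplex.homologyFunctor C c n) := by
  have : PreservesColimitsOfShape J (HomologicalComplex.shortComplexFunctor C c n) :=
    ⟨⟨fun h => ⟨ShortComplex.isColimitOfIsColimitπ _
      (isColimitOfPreserves (HomologicalComplex.eval C c _) h)
      (isColimitOfPreserves (HomologicalComplex.eval C c _) h)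
      (isColimitOfPreserves (HomologicalComplex.eval C c _) h)⟩⟩⟩
  exact preservesColimitsOfShape_of_natIso
    (HomologicalComplex.homologyFunctorIso C c n).symm

end Homology

section HomotopyCategory

variable {V : Type*} [Category* V] [Preadditive V] {ι J : Type*} {c : ComplexShape ι}
  [HasCoproductsOfShape J V]

/-- The homotopy on a coproduct of complexes glued from homotopies on the summands. -/
noncomputable def homotopyZeroOfIsColimit {K : Discrete J ⥤ HomologicalComplex V c} {s : Cocone K}
    (hs : IsColimit s) {L : HomologicalComplex V c} {φ : s.pt ⟶ L}
    (h : ∀ j, Homotopy (s.ι.app j ≫ φ) 0) : Homotopy φ 0 :=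
  let e (i : ι) := isColimitOfPreserves (HomologicalComplex.eval V c i) hs
  let H (i i' : ι) : s.pt.X i ⟶ L.X i' :=
    (e i).desc ⟨L.X i', Discrete.natTrans fun j => (h j).hom i i'⟩
  have hH (j : Discrete J) : (fun i i' => (s.ι.app j).f i ≫ H i i') = (h j).hom := by
    ext i i'
    exact (e i).fac _ j
  { hom := H
    zero i i' hii' := (e i).hom_ext fun j =>
      ((e i).fac _ j).trans (((h j).zero i i' hii').trans comp_zero.symm)
    comm i := (e i).hom_ext fun j => by
      have := (h j).comm i
      rw [← hH, dNext_comp_left, prevD_comp_left] at this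
      simp only [HomologicalComplex.zero_f, add_zero] at this ⊢
      exact this.trans (Preadditive.comp_add ..).symm }

lemma homotopyCategory_hom_ext_of_isColimit {K : Discrete J ⥤ HomologicalComplex V c}
    {s : Cocone K} (hs : IsColimit s) {L : HomotopyCategory V c}
    {f g : (HomotopyCategory.quotient V c).obj s.pt ⟶ L}
    (h : ∀ j, (HomotopyCategory.quotient V c).map (s.ι.app j) ≫ f =
      (HomotopyCategory.quotient V c).map (s.ι.app j) ≫ g) : f = g := by
  obtain ⟨L, rfl⟩ := HomotopyCategory.quotient_obj_surjective L
  obtain ⟨φ, hφ⟩ := (HomotopyCategory.quotient V c).map_surjective (f - g)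
  rw [← sub_eq_zero, ← hφ, HomotopyCategory.quotient_map_eq_zero_iff]
  refine ⟨homotopyZeroOfIsColimit hs fun j => HomotopyCategory.homotopyOfEq _ _ ?_⟩
  rw [Functor.map_comp, hφ, Preadditive.comp_sub, h j, sub_self, Functor.map_zero]

instance preservesCoproductsOfShape_homotopyCategoryQuotient :
    PreservesColimitsOfShape (Discrete J) (HomotopyCategory.quotient V c) where
  preservesColimit {K} := ⟨fun {s} hs => ⟨IsColimit.ofExistsUnique fun t => by
    let t' : Cocone K := ⟨t.pt.as, Discrete.natTrans fun j => Quot.out (t.ι.app j)⟩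
    have ht (j) : (HomotopyCategory.quotient V c).map (s.ι.app j) ≫
        (HomotopyCategory.quotient V c).map (hs.desc t') = t.ι.app j :=
      ((HomotopyCategory.quotient V c).map_comp _ _).symm.trans <|
        (congrArg _ (hs.fac t' j)).trans (HomotopyCategory.quotient_map_out _)
    exact ⟨(HomotopyCategory.quotient V c).map (hs.desc t'), ht, fun m hm =>
      homotopyCategory_hom_ext_of_isColimit hs fun j => (hm j).trans (ht j).symm⟩⟩⟩

instance hasCoproductsOfShape_homotopyCategory :
    HasCoproductsOfShape J (HomotopyCategory V c) :=
  hasCoproductsOfShape_of_essSurj (HomotopyCategory.quotient V c)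

end HomotopyCategory

section HomotopyCategoryHomology

variable {C : Type*} [Category* C] [Abelian C] {ι J : Type*} (c : ComplexShape ι)
  [HasCoproductsOfShape J C] [HasExactColimitsOfShape (Discrete J) C]

instance preservesCoproductsOfShape_homotopyCategoryHomologyFunctor (n : ι) :
    PreservesColimitsOfShape (Discrete J) (HomotopyCategory.homologyFunctor C c n) := by
  have := preservesColimitsOfShape_of_natIso (J := Discrete J)
    (HomotopyCategory.homologyFunctorFactors C c n).symm
  exact preservesCoproductsOfShape_of_essSurj_comp (HomotopyCategory.quotient C c) _

instance isStableUnderCoproductsOfShape_quasiIso :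
    (HomotopyCategory.quasiIso C c).IsStableUnderCoproductsOfShape J where
  condition X₁ X₂ c₁ c₂ h₁ h₂ f hf φ hφ := fun n =>
    MorphismProperty.IsStableUnderColimitsOfShape.condition
      (W := MorphismProperty.isomorphisms C) _ _
      _ _ (isColimitOfPreserves (HomotopyCategory.homologyFunctor C c n) h₁)
      (isColimitOfPreserves (HomotopyCategory.homologyFunctor C c n) h₂)
      (Functor.whiskerRight f _) (fun j => hf j n) _ fun j => by
        simpa using congrArg (HomotopyCategory.homologyFunctor C c n).map (hφ j)

end HomotopyCategoryHomology

section Localization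

open MorphismProperty

variable {C D : Type*} [Category* C] [Category* D] {J : Type*} [HasCoproductsOfShape J C]

lemma exists_coproduct_mem {W : MorphismProperty C} [W.IsStableUnderCoproductsOfShape J]
    {K : Discrete J ⥤ C} {s : Cocone K} (hs : IsColimit s) {X : Discrete J → C}
    {t : ∀ j, X j ⟶ K.obj j} (ht : ∀ j, W (t j)) :
    ∃ (s' : Cocone (Discrete.functor fun j => X ⟨j⟩)) (_ : IsColimit s') (σ : s'.pt ⟶ s.pt),
      W σ ∧ ∀ j, s'.ι.app j ≫ σ = t j ≫ s.ι.app j := by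
  let α : Discrete.functor (fun j => X ⟨j⟩) ⟶ K := Discrete.natTrans fun j => t j
  let s' := colimit.cocone (Discrete.functor fun j => X ⟨j⟩)
  let σ := (colimit.isColimit _).map s α
  have hσ (j) : s'.ι.app j ≫ σ = t j ≫ s.ι.app j := (colimit.isColimit _).ι_map s α j
  exact ⟨s', colimit.isColimit _, σ, IsStableUnderColimitsOfShape.condition _ _ _ _
    (colimit.isColimit _) hs α (fun j => ht j) _ hσ, hσ⟩

variable (L : C ⥤ D) (W : MorphismProperty C) [L.IsLocalization W]
  [W.HasRightCalculusOfFractions] [W.IsStableUnderCoproductsOfShape J] {K : Discrete J ⥤ C}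
  {s : Cocone K}

include W in
lemma localization_hom_ext_of_isColimit [W.HasLeftCalculusOfFractions] (hs : IsColimit s) {Y : D}
    {f g : L.obj s.pt ⟶ Y} (h : ∀ j, L.map (s.ι.app j) ≫ f = L.map (s.ι.app j) ≫ g) :
    f = g := by
  have := Localization.essSurj L W
  wlog hY : ∃ Y', Y = L.obj Y' generalizing Y
  · rw [← cancel_mono (L.objObjPreimageIso Y).inv]
    exact this (fun j => by simp only [reassoc_of% h j]) ⟨_, rfl⟩
  obtain ⟨Y, rfl⟩ := hY
  obtain ⟨φ, rfl, rfl⟩ := Localization.exists_leftFraction₂ L W f g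
  have fst_fac : φ.fst.map L (Localization.inverts L W) ≫ L.map φ.s = L.map φ.f :=
    φ.fst.map_comp_map_s _ _
  have snd_fac : φ.snd.map L (Localization.inverts L W) ≫ L.map φ.s = L.map φ.f' :=
    φ.snd.map_comp_map_s _ _
  have : IsIso (L.map φ.s) := Localization.inverts L W _ φ.hs
  rw [← cancel_mono (L.map φ.s), fst_fac, snd_fac]
  have hφ (j) : L.map (s.ι.app j ≫ φ.f) = L.map (s.ι.app j ≫ φ.f') := by
    rw [Functor.map_comp, Functor.map_comp, ← fst_fac, ← snd_fac, reassoc_of% h j]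
  choose X t ht fac using fun j => (W.map_eq_iff_precomp L _ _).1 (hφ j)
  obtain ⟨s', hs', σ, hσ, facσ⟩ := exists_coproduct_mem hs ht
  refine (W.map_eq_iff_precomp L _ _).2 ⟨_, σ, hσ, hs'.hom_ext fun j => ?_⟩
  simpa [reassoc_of% facσ j] using fac j

include W in
lemma exists_desc_of_isLocalization (hs : IsColimit s) (t : Cocone (K ⋙ L)) :
    ∃ d : L.obj s.pt ⟶ t.pt, ∀ j, L.map (s.ι.app j) ≫ d = t.ι.app j := by
  have := Localization.essSurj L W
  obtain ⟨Y, ⟨e⟩⟩ := Functor.EssSurj.mem_essImage L t.pt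
  choose φ hφ using fun j => Localization.exists_rightFraction L W (t.ι.app j ≫ e.inv)
  obtain ⟨s', hs', σ, hσ, facσ⟩ := exists_coproduct_mem hs fun j => (φ j).hs
  obtain ⟨ψ, hψ⟩ : ∃ ψ : s'.pt ⟶ Y, ∀ j, s'.ι.app j ≫ ψ = (φ j).f :=
    ⟨hs'.desc ⟨Y, Discrete.natTrans fun j => (φ j).f⟩, hs'.fac _⟩
  have : IsIso (L.map σ) := Localization.inverts L W σ hσ
  refine ⟨inv (L.map σ) ≫ L.map ψ ≫ e.hom, fun j => ?_⟩
  have : IsIso (L.map (φ j).s) := Localization.inverts L W _ (φ j).hs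
  have hφ' : L.map (φ j).s ≫ t.ι.app j ≫ e.inv = L.map (φ j).f := by
    rw [hφ j, RightFraction.map_s_comp_map]
  rw [← cancel_epi (L.map (φ j).s), ← L.map_comp_assoc, ← facσ j, L.map_comp_assoc,
    IsIso.hom_inv_id_assoc, ← L.map_comp_assoc, hψ, ← hφ']
  simp

lemma preservesCoproductsOfShape_of_isLocalization [W.HasLeftCalculusOfFractions] :
    PreservesColimitsOfShape (Discrete J) L where
  preservesColimit {K} := ⟨fun {s} hs => ⟨IsColimit.ofExistsUnique fun t => by
    obtain ⟨d, hd⟩ := exists_desc_of_isLocalization L W hs t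
    exact ⟨d, hd, fun m hm => localization_hom_ext_of_isColimit L W hs fun j =>
      (hm j).trans (hd j).symm⟩⟩⟩

end Localization

section DerivedCategory

variable {C : Type*} [Category* C] [Abelian C] [HasDerivedCategory C] {J : Type*}
  [HasCoproductsOfShape J C] [HasExactColimitsOfShape (Discrete J) C]

instance preservesCoproductsOfShape_derivedCategoryQh :
    PreservesColimitsOfShape (Discrete J) (DerivedCategory.Qh (C := C)) :=
  preservesCoproductsOfShape_of_isLocalization _ (HomotopyCategory.quasiIso C (.up ℤ))

instance preservesCoproductsOfShape_derivedCategoryQ :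
    PreservesColimitsOfShape (Discrete J) (DerivedCategory.Q (C := C)) :=
  preservesColimitsOfShape_of_natIso (DerivedCategory.quotientCompQhIso C)

instance hasCoproductsOfShape_derivedCategory :
    HasCoproductsOfShape J (DerivedCategory C) :=
  hasCoproductsOfShape_of_essSurj DerivedCategory.Q

instance preservesCoproductsOfShape_derivedCategoryHomologyFunctor (n : ℤ) :
    PreservesColimitsOfShape (Discrete J) (DerivedCategory.homologyFunctor C n) := by
  have := preservesColimitsOfShape_of_natIso (J := Discrete J)
    (DerivedCategory.homologyFunctorFactors C n).symm
  exact preservesCoproductsOfShape_of_essSurj_comp DerivedCategory.Q _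

instance preservesCoproductsOfShape_mapDerivedCategory {D : Type*} [Category* D] [Abelian D]
    [HasDerivedCategory D] [HasCoproductsOfShape J D] [HasExactColimitsOfShape (Discrete J) D]
    (F : C ⥤ D) [F.Additive] [PreservesFiniteLimits F] [PreservesFiniteColimits F]
    [PreservesColimitsOfShape (Discrete J) F] :
    PreservesColimitsOfShape (Discrete J) F.mapDerivedCategory := by
  have : PreservesColimitsOfShape (Discrete J) (F.mapHomologicalComplex (.up ℤ)) :=
    ⟨⟨fun {s} hs => ⟨HomologicalComplex.isColimitOfEval _ _ fun i =>
      isColimitOfPreserves F (isColimitOfPreserves (HomologicalComplex.eval C _ i) hs)⟩⟩⟩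
  have := preservesColimitsOfShape_of_natIso (J := Discrete J) F.mapDerivedCategoryFactors.symm
  exact preservesCoproductsOfShape_of_essSurj_comp DerivedCategory.Q _

end DerivedCategory

section Telescope

variable {A : Type*} [Category* A] [Preadditive A] {M : ℕ → A} {N : A}

/-- The split short exact sequence `0 ⟶ ∐ M ⟶ ∐ M ⟶ N ⟶ 0` of a telescope of maps `t i` each of
which factors through `M i ⟶ N`, followed by a section `s i` of `M (i + 1) ⟶ N`. -/
noncomputable def telescopeSplitting {c : Cofan M} (hc : IsColimit c) {σ : c.pt ⟶ c.pt}
    {q : c.pt ⟶ N} (t : ∀ i, M i ⟶ M (i + 1)) (s : ∀ i, N ⟶ M (i + 1))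
    (hσ : ∀ i, c.inj i ≫ σ = t i ≫ c.inj (i + 1)) (ht : ∀ i, c.inj i ≫ q ≫ s i = t i)
    (hs : ∀ i, s i ≫ c.inj (i + 1) ≫ q = 𝟙 N) (w : (𝟙 _ - σ) ≫ q = 0) :
    (ShortComplex.mk (𝟙 _ - σ) q w).Splitting :=
  let a (i : ℕ) : N ⟶ c.pt := ∑ k ∈ Finset.range i, s k ≫ c.inj (k + 1)
  have a_succ (i : ℕ) : a (i + 1) = a i + s i ≫ c.inj (i + 1) := Finset.sum_range_succ _ _
  have s_t (i : ℕ) : s i ≫ t (i + 1) = s (i + 1) := by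
    rw [← ht, ← Category.assoc (c.inj _), ← Category.assoc, hs, Category.id_comp]
  have t_q (i : ℕ) : t i ≫ c.inj (i + 1) ≫ q = c.inj i ≫ q := by
    rw [← ht]
    simp only [Category.assoc, hs, Category.comp_id]
  have a_comp (i : ℕ) : a i ≫ (𝟙 _ - σ) = s 0 ≫ c.inj 1 - s i ≫ c.inj (i + 1) := by
    induction i with
    | zero => simp [a]
    | succ i ih =>
      rw [a_succ, Preadditive.add_comp, ih, Preadditive.comp_sub, Category.comp_id,
        Category.assoc, hσ, reassoc_of% (s_t i)]
      abel
  { r := Cofan.IsColimit.desc hc fun i => c.inj i - (c.inj i ≫ q) ≫ a i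
    s := s 0 ≫ c.inj 1
    f_r := Cofan.IsColimit.hom_ext hc _ _ fun i => by
      simp only [Preadditive.sub_comp, Preadditive.comp_sub, Category.id_comp, Category.comp_id,
        Cofan.IsColimit.fac, reassoc_of% (hσ i), reassoc_of% (t_q i), a_succ,
        Preadditive.comp_add, Category.assoc, reassoc_of% (ht i)]
      abel
    s_g := by simpa using hs 0
    id := Cofan.IsColimit.hom_ext hc _ _ fun i => by
      simp only [Preadditive.comp_add, Cofan.IsColimit.fac_assoc, Preadditive.sub_comp,
        Category.assoc, a_comp]
      simp only [Preadditive.comp_sub, Category.comp_id, hσ, reassoc_of% (ht i)]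
      abel }

lemma nonempty_splitting_map_telescope {D A : Type*} [Category* D] [Category* A] [Preadditive D]
    [Preadditive A] (H : D ⥤ A) [H.Additive] {M : ℕ → D} {N : D}
    [PreservesColimit (Discrete.functor M) H] {c : Cofan M} (hc : IsColimit c)
    (t : ∀ i, M i ⟶ M (i + 1)) {σ : c.pt ⟶ c.pt} {q : c.pt ⟶ N}
    (hσ : ∀ i, c.inj i ≫ σ = t i ≫ c.inj (i + 1)) (w : (𝟙 _ - σ) ≫ q = 0)
    (h : ∀ i, ∃ s, H.map (c.inj i ≫ q) ≫ s = H.map (t i) ∧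
      s ≫ H.map (c.inj (i + 1) ≫ q) = 𝟙 _) :
    Nonempty (ShortComplex.mk (H.map (𝟙 _ - σ)) (H.map q)
      (by rw [← H.map_comp, w, H.map_zero])).Splitting := by
  choose s hst hsp using h
  have hHc := Cofan.isColimitMapCoconeEquiv H _ c (isColimitOfPreserves H hc)
  have hHσ (i : ℕ) : H.map (c.inj i) ≫ H.map σ = H.map (t i) ≫ H.map (c.inj (i + 1)) := by
    rw [← H.map_comp, hσ, H.map_comp]
  have hH : H.map (𝟙 _ - σ) = 𝟙 (H.obj c.pt) - H.map σ := by rw [H.map_sub, H.map_id]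
  have hw : (𝟙 (H.obj c.pt) - H.map σ) ≫ H.map q = 0 := by
    rw [← hH, ← H.map_comp, w, H.map_zero]
  simp only [hH]
  simp only [H.map_comp, Category.assoc] at hst hsp
  exact ⟨telescopeSplitting hHc (fun i => H.map (t i)) s hHσ hst hsp hw⟩

end Telescope

section DerivedCategory

variable {C : Type*} [Category* C] [Abelian C] [HasDerivedCategory C]

lemma isIso_of_splitting_homology {T : Triangle (DerivedCategory C)}
    (hT : T ∈ distinguishedTriangles) {E : DerivedCategory C} {q : T.obj₂ ⟶ E}
    (w : T.mor₁ ≫ q = 0)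
    (h : ∀ n, Nonempty (ShortComplex.mk ((DerivedCategory.homologyFunctor C n).map T.mor₁)
      ((DerivedCategory.homologyFunctor C n).map q)
      (by rw [← Functor.map_comp, w, Functor.map_zero])).Splitting)
    {k : T.obj₃ ⟶ E} (hk : T.mor₂ ≫ k = q) : IsIso k := by
  refine (DerivedCategory.isIso_iff C k).2 fun n => ?_
  let H := DerivedCategory.homologyFunctor C n
  obtain ⟨r, s, hs, hrs⟩ : ∃ (r : H.obj T.obj₂ ⟶ H.obj T.obj₁) (s : H.obj E ⟶ H.obj T.obj₂),
      s ≫ H.map q = 𝟙 _ ∧ r ≫ H.map T.mor₁ + H.map q ≫ s = 𝟙 _ :=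
    let ⟨spl⟩ := h n
    ⟨spl.r, spl.s, spl.s_g, spl.id⟩
  have epi_mor₂ : Epi (H.map T.mor₂) := by
    have mono_mor₁ : Mono ((DerivedCategory.homologyFunctor C (n + 1)).map T.mor₁) :=
      (h (n + 1)).some.splitMono_f.mono
    exact (DerivedCategory.HomologySequence.epi_homologyMap_mor₂_iff T hT n (n + 1) rfl).2
      ((DerivedCategory.HomologySequence.mono_homologyMap_mor₁_iff T hT n (n + 1) rfl).1 mono_mor₁)
  have hk' : H.map T.mor₂ ≫ H.map k = H.map q := by rw [← H.map_comp, hk]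
  have mor₁_mor₂ : H.map T.mor₁ ≫ H.map T.mor₂ = 0 := by
    rw [← H.map_comp, comp_distTriang_mor_zero₁₂ T hT, H.map_zero]
  refine ⟨s ≫ H.map T.mor₂, ?_, ?_⟩
  · rw [← cancel_epi (H.map T.mor₂), reassoc_of% hk', Category.comp_id]
    simpa [mor₁_mor₂] using hrs =≫ H.map T.mor₂
  · rw [Category.assoc, hk', hs]

end DerivedCategory

namespace IsLocalizingSub

open DerivedCategory

variable {C : Type*} [Category* C] [Abelian C] [HasDerivedCategory C]
  {L : Set (DerivedCategory C)} (hL : IsLocalizingSub.{w} L)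

include hL

lemma mem_of_tower [HasCoproductsOfShape ℕ C] [HasExactColimitsOfShape (Discrete ℕ) C]
    {E : DerivedCategory C} {X : ℕ → Over E} (hX : ∀ i, (X i).left ∈ L)
    (t : ∀ i, X i ⟶ X (i + 1))
    (hs : ∀ i n, ∃ s,
      (homologyFunctor C n).map (X i).hom ≫ s = (homologyFunctor C n).map (t i).left ∧
      s ≫ (homologyFunctor C n).map (X (i + 1)).hom = 𝟙 _) : E ∈ L := by
  let c : Cofan fun i => (X i).left := Cofan.mk _ (Sigma.ι fun i => (X i).left)
  have hc : IsColimit c := coproductIsCoproduct _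
  have hcL : c.pt ∈ L := hL.cofan_mem_of_small hc hX
  let σ : c.pt ⟶ c.pt := Cofan.IsColimit.desc hc fun i => (t i).left ≫ c.inj (i + 1)
  have hσ (i : ℕ) : c.inj i ≫ σ = (t i).left ≫ c.inj (i + 1) := Cofan.IsColimit.fac hc _ i
  let q : c.pt ⟶ E := Cofan.IsColimit.desc hc fun i => (X i).hom
  have hq (i : ℕ) : c.inj i ≫ q = (X i).hom := Cofan.IsColimit.fac hc _ i
  have hσq : (𝟙 _ - σ) ≫ q = 0 := Cofan.IsColimit.hom_ext hc _ _ fun i => by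
    simp [hq, reassoc_of% (hσ i)]
  obtain ⟨Y, g, δ, hT⟩ := distinguished_cocone_triangle (𝟙 c.pt - σ)
  obtain ⟨k, hk⟩ := Triangle.yoneda_exact₂ _ hT q hσq
  have splitting (n : ℤ) := nonempty_splitting_map_telescope (homologyFunctor C n) hc
    (fun i => (t i).left) hσ hσq fun i => by simpa only [hq] using hs i n
  have : IsIso k := isIso_of_splitting_homology hT hσq splitting hk.symm
  exact hL.mem_of_iso (asIso k) (hL.cone_mem _ hT hcL hcL)

variable (hits : ∀ E : DerivedCategory C, ∃ P ∈ L, ∃ π : P ⟶ E,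
  ∀ n, Epi ((homologyFunctor C n).map π))
include hits

lemma exists_tower_step {E : DerivedCategory C} (X : Over E) (hX : X.left ∈ L)
    (hp : ∀ n, Epi ((homologyFunctor C n).map X.hom)) :
    ∃ (Y : Over E) (t : X ⟶ Y), Y.left ∈ L ∧
      ∀ n, ∃ s, (homologyFunctor C n).map X.hom ≫ s = (homologyFunctor C n).map t.left ∧
        s ≫ (homologyFunctor C n).map Y.hom = 𝟙 _ := by
  obtain ⟨Z, i, δ, hT⟩ := distinguished_cocone_triangle₁ X.hom
  obtain ⟨P, hP, π, hπ⟩ := hits Z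
  obtain ⟨Y, t, δ', hT'⟩ := distinguished_cocone_triangle (π ≫ i)
  have i_p : i ≫ X.hom = 0 := comp_distTriang_mor_zero₁₂ _ hT
  have π_i_p : (π ≫ i) ≫ X.hom = 0 := by rw [Category.assoc, i_p, comp_zero]
  have π_i_t : (π ≫ i) ≫ t = 0 := comp_distTriang_mor_zero₁₂ _ hT'
  obtain ⟨q, hq⟩ : ∃ q, X.hom = t ≫ q :=
    Triangle.yoneda_exact₂ _ hT' X.hom π_i_p
  refine ⟨Over.mk q, Over.homMk t hq.symm, hL.cone_mem _ hT' hP hX, fun n => ?_⟩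
  let H := homologyFunctor C n
  -- `H(P)` surjects onto `H(Z)`, so attaching `P` kills the whole kernel of `H(X) ⟶ H(E)`.
  have i_t : H.map i ≫ H.map t = 0 := by
    rw [← cancel_epi (H.map π), ← H.map_comp, ← H.map_comp, ← Category.assoc, π_i_t]
    simp
  have exact : (ShortComplex.mk (H.map i) (H.map X.hom) _).Exact :=
    HomologySequence.exact₂ _ hT n
  have epi_p := hp n
  obtain ⟨s, hs⟩ : ∃ s, H.map X.hom ≫ s = H.map t :=
    ⟨exact.desc (H.map t) i_t, exact.g_desc (H.map t) i_t⟩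
  refine ⟨s, hs, ?_⟩
  rw [← cancel_epi (H.map X.hom), reassoc_of% hs, ← H.map_comp, Category.comp_id]
  exact congrArg H.map hq.symm

lemma mem_of_forall_exists_epi_homology [HasCoproductsOfShape ℕ C]
    [HasExactColimitsOfShape (Discrete ℕ) C] (E : DerivedCategory C) : E ∈ L := by
  let S := {X : Over E // X.left ∈ L ∧ ∀ n, Epi ((homologyFunctor C n).map X.hom)}
  have step (X : S) : ∃ (Y : S) (t : X.1 ⟶ Y.1), ∀ n, ∃ s,
      (homologyFunctor C n).map X.1.hom ≫ s = (homologyFunctor C n).map t.left ∧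
        s ≫ (homologyFunctor C n).map Y.1.hom = 𝟙 _ := by
    obtain ⟨Y, t, hY, hs⟩ := hL.exists_tower_step hits X.1 X.2.1 X.2.2
    exact ⟨⟨Y, hY, fun n => let ⟨s, _, hs⟩ := hs n; (SplitEpi.mk s hs).epi⟩, t, hs⟩
  choose next t hs using step
  obtain ⟨P, hP, π, hπ⟩ := hits E
  let X (i : ℕ) : S := Nat.rec ⟨Over.mk π, hP, hπ⟩ (fun _ => next) i
  exact hL.mem_of_tower (fun i => (X i).2.1) (fun i => t (X i)) fun i => hs (X i)

end IsLocalizingSub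

section Projective

open DerivedCategory

variable {C : Type*} [Category* C] [Abelian C]

lemma exists_homologyMap_single_eq {ι : Type*} {c : ComplexShape ι} [DecidableEq ι]
    (K : HomologicalComplex C c) (j : ι) {G : C} [Projective G] (φ : G ⟶ K.homology j) :
    ∃ α : (HomologicalComplex.single C c j).obj G ⟶ K,
      (HomologicalComplex.singleObjHomologySelfIso c j G).inv ≫
        HomologicalComplex.homologyMap α j = φ := by
  let ψ : G ⟶ K.cycles j := Projective.factorThru φ (K.homologyπ j)
  have hψ : ψ ≫ K.homologyπ j = φ := Projective.factorThru_comp φ (K.homologyπ j)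
  let α := HomologicalComplex.mkHomFromSingle (ψ ≫ K.iCycles j) (by simp)
  have hα : HomologicalComplex.cyclesMap α j =
      (HomologicalComplex.singleObjCyclesSelfIso c j G).hom ≫ ψ := by
    simp [← cancel_mono (K.iCycles j), α, HomologicalComplex.singleObjCyclesSelfIso_hom]
  refine ⟨α, ?_⟩
  rw [← HomologicalComplex.singleObjCyclesSelfIso_inv_homologyπ, Category.assoc,
    HomologicalComplex.homologyπ_naturality, ← Category.assoc, hα, Iso.inv_hom_id_assoc, hψ]

variable [HasDerivedCategory C]

lemma exists_single_comp_homologyFunctor_map_eq {E : DerivedCategory C} {n : ℤ} {G : C}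
    [Projective G] (φ : G ⟶ (homologyFunctor C n).obj E) :
    ∃ (ι : G ⟶ (homologyFunctor C n).obj ((singleFunctor C n).obj G))
      (α : (singleFunctor C n).obj G ⟶ E), ι ≫ (homologyFunctor C n).map α = φ := by
  let K := Q.objPreimage E
  let e : Q.obj K ≅ E := Q.objObjPreimageIso E
  let h (K : CochainComplex C ℤ) : (homologyFunctor C n).obj (Q.obj K) ≅ K.homology n :=
    (homologyFunctorFactors C n).app K
  let S : CochainComplex C ℤ := (CochainComplex.singleFunctor C n).obj G
  let i : (singleFunctor C n).obj G ≅ Q.obj S := (singleFunctorIsoCompQ C n).app G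
  let j : S.homology n ≅ G := HomologicalComplex.singleObjHomologySelfIso (.up ℤ) n G
  obtain ⟨β, hβ⟩ : ∃ β : S ⟶ K, j.inv ≫ HomologicalComplex.homologyMap β n =
      φ ≫ (homologyFunctor C n).map e.inv ≫ (h K).hom :=
    exists_homologyMap_single_eq K n _
  have nat : (h S).inv ≫ (homologyFunctor C n).map (Q.map β) =
      HomologicalComplex.homologyMap β n ≫ (h K).inv :=
    ((homologyFunctorFactors C n).inv.naturality β).symm
  refine ⟨j.inv ≫ (h S).inv ≫ (homologyFunctor C n).map i.inv, i.hom ≫ Q.map β ≫ e.hom, ?_⟩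
  rw [Category.assoc, Category.assoc, ← Functor.map_comp, Iso.inv_hom_id_assoc,
    Functor.map_comp, reassoc_of% nat, reassoc_of% hβ]
  simp [← Functor.map_comp]

end Projective

namespace IsLocalizingSub

open DerivedCategory

variable {C : Type u} [Category.{w} C] [Abelian C] [HasDerivedCategory C]
  {L : Set (DerivedCategory C)} (hL : IsLocalizingSub.{w} L)

include hL

lemma singleFunctor_obj_mem {M : C} {m : ℤ} (h : (singleFunctor C m).obj M ∈ L) (n : ℤ) :
    (singleFunctor C n).obj M ∈ L :=
  hL.mem_of_iso (((singleFunctors C).shiftIso (m - n) n m (by simp)).app M) (hL.shift_mem _ h)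

lemma mem_of_projective_separator [HasCoproducts.{w} C] [AB4OfSize.{w} C] {G : C} [Projective G]
    (hG : IsSeparator G) {m : ℤ} (h : (singleFunctor C m).obj G ∈ L) (E : DerivedCategory C) :
    E ∈ L := by
  have : HasCoproducts.{0} C := hasCoproducts_shrink.{0, w}
  refine hL.mem_of_forall_exists_epi_homology (fun E => ?_) E
  let P (i : Σ n, G ⟶ (homologyFunctor C n).obj E) := (singleFunctor C i.1).obj G
  choose ι α hα using fun i : Σ n, G ⟶ (homologyFunctor C n).obj E =>
    exists_single_comp_homologyFunctor_map_eq i.2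
  refine ⟨∐ P, hL.coprod_mem _ _ (coproductIsCoproduct P) fun i => hL.singleFunctor_obj_mem h i.1,
    Sigma.desc α, fun n => ⟨fun g g' hg => hG.def _ _ fun φ => ?_⟩⟩
  obtain ⟨ψ, hψ⟩ : ∃ ψ, ψ ≫ (homologyFunctor C n).map (Sigma.desc α) = φ := by
    refine ⟨ι ⟨n, φ⟩ ≫ (homologyFunctor C n).map (Sigma.ι P ⟨n, φ⟩), ?_⟩
    rw [Category.assoc, ← Functor.map_comp, Sigma.ι_desc]
    exact hα ⟨n, φ⟩
  rw [← hψ, Category.assoc, hg, Category.assoc]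

end IsLocalizingSub

section MapDerivedCategory

open DerivedCategory

variable {C : Type u} [Category.{w} C] [Abelian C] [HasDerivedCategory C]
  [HasCoproducts.{w} C] [AB4OfSize.{w} C]
  {D : Type*} [Category* D] [Abelian D] [HasDerivedCategory D]
  [HasCoproducts.{w} D] [AB4OfSize.{w} D]
  (F : C ⥤ D) [F.Additive] [PreservesFiniteLimits F] [PreservesFiniteColimits F]
  [∀ ι : Type w, PreservesColimitsOfShape (Discrete ι) F]

lemma IsLocalizingSub.mapDerivedCategory_obj_mem {L : Set (DerivedCategory D)}
    (hL : IsLocalizingSub.{w} L) {G : C} [Projective G] (hG : IsSeparator G) {m : ℤ}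
    (h : (singleFunctor D m).obj (F.obj G) ∈ L) (X : DerivedCategory C) :
    F.mapDerivedCategory.obj X ∈ L :=
  have := fun ι : Type w => preservesCoproductsOfShape_mapDerivedCategory F (J := ι)
  (hL.preimage F.mapDerivedCategory).mem_of_projective_separator hG
    (hL.mem_of_iso ((F.mapDerivedCategorySingleFunctor m).symm.app G) h) X

lemma IsLocalizingSub.singleFunctor_obj_map_obj_mem {L : Set (DerivedCategory D)}
    (hL : IsLocalizingSub.{w} L) {G : C} [Projective G] (hG : IsSeparator G) {m : ℤ}
    (h : (singleFunctor D m).obj (F.obj G) ∈ L) (X : C) :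
    (singleFunctor D m).obj (F.obj X) ∈ L :=
  hL.mem_of_iso ((F.mapDerivedCategorySingleFunctor m).app X)
    (hL.mapDerivedCategory_obj_mem F hG h _)

end MapDerivedCategory

section Single

variable {C : Type u} [Category.{v} C] [Abelian C] [HasDerivedCategory C]

open DerivedCategory

lemma trW_singleFunctor_map {P : ObjectProperty (DerivedCategory C)} [P.IsTriangulated]
    {M N : C} (φ : M ⟶ N) (hk : P ((singleFunctor C 0).obj (kernel φ)))
    (hc : P ((singleFunctor C 0).obj (cokernel φ))) : P.trW ((singleFunctor C 0).map φ) := by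
  have hπ : (ShortComplex.mk (kernel.ι φ) (Abelian.coimage.π φ) (by simp)).ShortExact :=
    { exact := ShortComplex.exact_cokernel _ }
  have hι : (ShortComplex.mk (Abelian.image.ι φ) (cokernel.π φ) (by simp)).ShortExact :=
    { exact := ShortComplex.exact_kernel _ }
  rw [← Abelian.coimage_image_factorisation φ, Functor.map_comp, Functor.map_comp]
  exact P.trW.comp_mem _ _ (.mk' _ hπ.singleTriangle_distinguished hk)
    (P.trW.comp_mem _ _ (P.trW_of_isIso _) (.mk _ hι.singleTriangle_distinguished hc))

end Single

section Homology

lemma quasiIso_mapHomologicalComplex_app {C D ι : Type*} [Category* C] [Abelian C] [Category* D]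
    [Abelian D] {F G : C ⥤ D} [F.Additive] [PreservesFiniteLimits F] [PreservesFiniteColimits F]
    [G.Additive] [PreservesFiniteLimits G] [PreservesFiniteColimits G] (η : F ⟶ G)
    {c : ComplexShape ι} {K : HomologicalComplex C c} (hK : ∀ i, IsIso (η.app (K.homology i))) :
    QuasiIso ((NatTrans.mapHomologicalComplex η c).app K) where
  quasiIsoAt i := by
    have : IsIso (η.app (K.sc i).homology) := hK i
    have h : HomologicalComplex.homologyMap ((NatTrans.mapHomologicalComplex η c).app K) i =
        ((K.sc i).mapHomologyIso F).hom ≫ η.app (K.sc i).homology ≫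
          ((K.sc i).mapHomologyIso G).inv :=
      (K.sc i).homologyMap_mapNatTrans η
    rw [quasiIsoAt_iff_isIso_homologyMap, h]
    exact ((K.sc i).mapHomologyIso F ≪≫ asIso (η.app (K.sc i).homology) ≪≫
      ((K.sc i).mapHomologyIso G).symm).isIso_hom

open DerivedCategory

variable {C : Type u} [Category.{v} C] [Abelian C] [HasDerivedCategory C]

lemma nonempty_iso_mapDerivedCategory_obj {F : C ⥤ C} [F.Additive] [PreservesFiniteLimits F]
    [PreservesFiniteColimits F] (η : 𝟭 C ⟶ F) {E : DerivedCategory C}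
    (hE : ∀ n, IsIso (η.app ((homologyFunctor C n).obj E))) :
    Nonempty (E ≅ F.mapDerivedCategory.obj E) := by
  let K : CochainComplex C ℤ := Q.objPreimage E
  let e : Q.obj K ≅ E := Q.objObjPreimageIso E
  have hK (n) : IsIso (η.app (K.homology n)) :=
    (NatTrans.isIso_app_iff_of_iso η
      ((homologyFunctorFactors C n).symm.app K ≪≫ (homologyFunctor C n).mapIso e)).2 (hE n)
  have : QuasiIso ((NatTrans.mapHomologicalComplex η (.up ℤ)).app K) :=
    quasiIso_mapHomologicalComplex_app η hK
  exact ⟨e.symm ≪≫ Q.mapIso ((Functor.mapHomologicalComplexIdIso C (.up ℤ)).symm.app K) ≪≫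
    asIso (Q.map ((NatTrans.mapHomologicalComplex η (.up ℤ)).app K)) ≪≫
    (F.mapDerivedCategoryFactors.app K).symm ≪≫ F.mapDerivedCategory.mapIso e⟩

variable {k : Type*} [Ring k] [Linear k C]

instance homologyFunctor_linear (n : ℤ) : (homologyFunctor C n).Linear k := by
  have : (HomologicalComplex.homologyFunctor C (.up ℤ) n).Linear k :=
    ⟨fun {K L} φ r => ShortComplex.homologyMap_smul
      ((HomologicalComplex.shortComplexFunctor C (.up ℤ) n).map φ) r⟩
  have : Localization.Lifting Q (HomologicalComplex.quasiIso C (.up ℤ))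
      (HomologicalComplex.homologyFunctor C (.up ℤ) n) (homologyFunctor C n) :=
    ⟨homologyFunctorFactors C n⟩
  rw [← Localization.functor_linear_iff Q (HomologicalComplex.quasiIso C (.up ℤ)) k
    (HomologicalComplex.homologyFunctor C (.up ℤ) n)]
  infer_instance

lemma isIso_smul_id_iff_homologyFunctor (r : k) (E : DerivedCategory C) :
    IsIso (r • 𝟙 E) ↔ ∀ n, IsIso (r • 𝟙 ((homologyFunctor C n).obj E)) := by
  simp only [DerivedCategory.isIso_iff, Functor.map_smul, CategoryTheory.Functor.map_id]

end Homology

section Modules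

open MonoidalCategory DerivedCategory

lemma bijective_of_isLocalizedModule {R : Type*} [CommSemiring R] (S : Submonoid R)
    {M N : Type*} [AddCommMonoid M] [Module R M] [AddCommMonoid N] [Module R N] (g : M →ₗ[R] N)
    [IsLocalizedModule S g] (hM : ∀ s : S, IsUnit (algebraMap R (Module.End R M) s)) :
    Function.Bijective g := by
  have : IsLocalizedModule S (.id : M →ₗ[R] M) :=
    ⟨hM, fun m => ⟨(m, 1), one_smul _ _⟩, fun h => ⟨1, congrArg _ h⟩⟩
  convert (IsLocalizedModule.linearEquiv S .id g).bijective
  ext x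
  exact (IsLocalizedModule.linearEquiv_apply S .id g x).symm

lemma isUnit_algebraMap_end_powers {R M : Type*} [CommSemiring R] [AddCommMonoid M]
    [Module R M] {f : R} (h : Function.Bijective fun m : M => f • m) (s : Submonoid.powers f) :
    IsUnit (algebraMap R (Module.End R M) s) := by
  obtain ⟨_, n, rfl⟩ := s
  have : IsUnit (algebraMap R (Module.End R M) f) := (Module.End.isUnit_iff _).2 h
  simpa using this.pow n

lemma bijective_smul_of_isLocalization_away {R : Type*} [CommSemiring R] (f : R) (A : Type*)
    [CommSemiring A] [Algebra R A] [IsLocalization.Away f A] :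
    Function.Bijective fun a : A => f • a := by
  simpa only [Algebra.smul_def] using
    IsUnit.isUnit_iff_mulLeft_bijective.1 (IsLocalization.Away.algebraMap_isUnit f)

lemma isSeparator_moduleCat_self {R : Type u} [Ring R] : IsSeparator (ModuleCat.of R R) :=
  fun M N g h H => by
    ext x
    simpa using ConcreteCategory.congr_hom
      (H _ (.mk ⟨⟩) (ModuleCat.ofHom (LinearMap.toSpanSingleton R M x))) 1

variable {R : Type u} [CommRing R]

lemma isIso_smul_id_iff_bijective_smul {f : R} {M : ModuleCat.{v} R} :
    IsIso (f • 𝟙 M) ↔ Function.Bijective (fun m : M => f • m) := by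
  rw [ConcreteCategory.isIso_iff_bijective]
  rfl

/-- The natural transformation `M ⟶ A ⊗ M`, `m ↦ 1 ⊗ₜ m`; for a localization `A` of `R` it is
localization of modules. -/
def toTensorLeft (A : Type u) [Ring A] [Algebra R A] :
    𝟭 (ModuleCat.{u} R) ⟶ tensorLeft (ModuleCat.of R A) where
  app M := ModuleCat.ofHom (TensorProduct.mk R A M 1)

variable [HasDerivedCategory.{w'} (ModuleCat.{u} R)]

lemma smod_mem_of_smul_id_eq_zero {L : Set (DerivedCategory (ModuleCat.{u} R))}
    (hL : IsLocalizingSub.{u} L) {f : R} (h : smod R (ModuleCat.of R (R ⧸ Ideal.span {f})) ∈ L)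
    {M : ModuleCat.{u} R} (hM : f • 𝟙 M = 0) : smod R M ∈ L := by
  have : HasDerivedCategory (ModuleCat.{u} (R ⧸ Ideal.span {f})) := .standard _
  have hM : Module.IsTorsionBySet R M (Ideal.span {f} : Ideal R) :=
    (Module.isTorsionBySet_span_singleton_iff f).2 fun x => ConcreteCategory.congr_hom hM x
  let := hM.module
  let F := ModuleCat.restrictScalars.{u} (Ideal.Quotient.mk (Ideal.span {f}))
  let e₁ : ModuleCat.of R (R ⧸ Ideal.span {f}) ≅ F.obj (ModuleCat.of _ (R ⧸ Ideal.span {f})) :=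
    LinearEquiv.toModuleIso (X₁ := R ⧸ Ideal.span {f})
      { AddEquiv.refl (R ⧸ Ideal.span {f}) with map_smul' := Algebra.smul_def }
  let e₂ : F.obj (ModuleCat.of _ M) ≅ M :=
    LinearEquiv.toModuleIso { AddEquiv.refl M with map_smul' := fun _ _ => rfl }
  -- Restriction of scalars is exact and preserves coproducts, so it maps `D(R/(f))`, which is
  -- generated by `R/(f)`, into `L`.
  exact hL.mem_of_iso ((singleFunctor _ 0).mapIso e₂)
    (hL.singleFunctor_obj_map_obj_mem F isSeparator_moduleCat_self
      (hL.mem_of_iso ((singleFunctor _ 0).mapIso e₁) h) _)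

lemma mem_loc_smod_self (E : DerivedCategory (ModuleCat.{u} R)) :
    E ∈ Loc.{u} {smod R (ModuleCat.of R R)} :=
  have h : smod R (ModuleCat.of R R) ∈ Loc.{u} {smod R (ModuleCat.of R R)} := subset_loc _ rfl
  (isLocalizingSub_loc _).mem_of_projective_separator isSeparator_moduleCat_self h E

lemma smul_id_smod (f : R) (M : ModuleCat.{u} R) :
    f • 𝟙 (smod R M) = (singleFunctor _ 0).map (f • 𝟙 M) := by
  rw [Functor.map_smul, CategoryTheory.Functor.map_id]
  rfl

lemma isIso_smul_id_of_mem_rightOrth {f : R} {E : DerivedCategory (ModuleCat.{u} R)}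
    (hE : E ∈ rightOrth (Loc.{u} {smod R (ModuleCat.of R (R ⧸ Ideal.span {f}))})) :
    IsIso (f • 𝟙 E) := by
  let L := Loc.{u} {smod R (ModuleCat.of R (R ⧸ Ideal.span {f}))}
  have hL : IsLocalizingSub.{u} L := isLocalizingSub_loc _
  have hf : smod R (ModuleCat.of R (R ⧸ Ideal.span {f})) ∈ L := subset_loc _ rfl
  have := hL.isTriangulated
  have hr : ObjectProperty.trW (· ∈ L) (f • 𝟙 (smod R (ModuleCat.of R R))) := by
    rw [smul_id_smod]
    exact trW_singleFunctor_map _ (smod_mem_of_smul_id_eq_zero hL hf (smul_id_kernel_smul_id f _))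
      (smod_mem_of_smul_id_eq_zero hL hf (smul_id_cokernel_smul_id f _))
  exact isIso_smul_id_of_rightOrthogonal mem_loc_smod_self hr fun _ g hX => hE hX g

lemma isIso_smul_id_smod {f : R} {M : ModuleCat.{u} R}
    (hM : Function.Bijective fun m : M => f • m) : IsIso (f • 𝟙 (smod R M)) := by
  rw [← isIso_smul_id_iff_bijective_smul] at hM
  rw [smul_id_smod]
  exact Functor.map_isIso _ _

lemma smul_id_smod_quotient_span (f : R) :
    f • 𝟙 (smod R (ModuleCat.of R (R ⧸ Ideal.span {f}))) = 0 := by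
  have : f • 𝟙 (ModuleCat.of R (R ⧸ Ideal.span {f})) = 0 := by
    refine ModuleCat.hom_ext (LinearMap.ext ?_)
    exact (Module.isTorsionBy_quotient_iff _ f).2 fun x =>
      Ideal.mul_mem_right x _ (Ideal.mem_span_singleton_self f)
  rw [smul_id_smod, this, Functor.map_zero]
  rfl

lemma mem_loc_smod_of_isUnit_homology (S : Submonoid R) (A : Type u) [CommRing A] [Algebra R A]
    [IsLocalization S A] {E : DerivedCategory (ModuleCat.{u} R)}
    (hE : ∀ n, ∀ s : S, IsUnit (algebraMap R (Module.End R
      ((homologyFunctor (ModuleCat.{u} R) n).obj E)) s)) :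
    E ∈ Loc.{u} {smod R (ModuleCat.of R A)} := by
  have : Module.Flat R A := IsLocalization.flat A S
  have hL := isLocalizingSub_loc.{u} {smod R (ModuleCat.of R A)}
  have hA : smod R ((tensorLeft (ModuleCat.of R A)).obj (ModuleCat.of R R)) ∈
      Loc.{u} {smod R (ModuleCat.of R A)} :=
    hL.mem_of_iso ((singleFunctor _ 0).mapIso (ρ_ (ModuleCat.of R A)).symm) (subset_loc _ rfl)
  obtain ⟨e⟩ : Nonempty (E ≅ (tensorLeft (ModuleCat.of R A)).mapDerivedCategory.obj E) :=
    nonempty_iso_mapDerivedCategory_obj (toTensorLeft A) fun n =>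
      (ConcreteCategory.isIso_iff_bijective _).2
        (bijective_of_isLocalizedModule S (TensorProduct.mk R A _ 1) (hE n))
  exact hL.mem_of_iso e.symm (hL.mapDerivedCategory_obj_mem _ isSeparator_moduleCat_self hA E)

lemma isIso_smul_id_iff_bijective_homology (f : R) (E : DerivedCategory (ModuleCat.{u} R)) :
    IsIso (f • 𝟙 E) ↔
      ∀ n : ℤ, Function.Bijective fun m : (homologyFunctor (ModuleCat.{u} R) n).obj E => f • m := by
  simp only [isIso_smul_id_iff_homologyFunctor, isIso_smul_id_iff_bijective_smul]

end Modules

/-- Theorem: for `f ∈ R`, a complex `E` in `D(R)` belongs to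
`Loc(R/(f))^⊥ = Loc(R_f)` if and only if multiplication by `f` is bijective on
every homology module `Hₙ(E)` (i.e. each `Hₙ(E)` is an `R_f`-module). -/
theorem mem_loc_localization_iff_smul_bijective_homology (R : Type u) [CommRing R]
    [HasDerivedCategory.{w'} (ModuleCat.{u} R)] (f : R)
    (E : DerivedCategory (ModuleCat.{u} R)) :
    (E ∈ rightOrth (Loc.{u} {smod R (ModuleCat.of R (R ⧸ Ideal.span {f}))}) ↔
      ∀ n : ℤ, Function.Bijective
        (fun m : ↥((DerivedCategory.homologyFunctor (ModuleCat.{u} R) n).obj E) =>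
          f • m)) ∧
    (E ∈ Loc.{u} {smod R (ModuleCat.of R (Localization.Away f))} ↔
      ∀ n : ℤ, Function.Bijective
        (fun m : ↥((DerivedCategory.homologyFunctor (ModuleCat.{u} R) n).obj E) =>
          f • m)) := by
  rw [← isIso_smul_id_iff_bijective_homology]
  refine ⟨⟨isIso_smul_id_of_mem_rightOrth, mem_rightOrth_loc_of_isIso_smul_id ?_⟩,
    ⟨fun h => loc_subset (isLocalizingSub_isIso_smul_id f) ?_ h, fun h => ?_⟩⟩
  · rintro _ rfl
    exact smul_id_smod_quotient_span f
  · rintro _ rfl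
    exact isIso_smul_id_smod (bijective_smul_of_isLocalization_away f _)
  · rw [isIso_smul_id_iff_bijective_homology] at h
    exact mem_loc_smod_of_isUnit_homology (.powers f) _ fun n =>
      isUnit_algebraMap_end_powers (h n)
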